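/- Let (R, 𝔪, k) be a non-regular complete local one-dimensional domain over an algebraically closed field k of characteristic 0, and suppose there is a surjection Ω_R ↠ 𝔪 from the universally finite module of differentials onto the maximal ideal. Then v(tr_R(Ω_R)) = v(𝔪), where v is the valuation of the integral closure R̄ = k[[t]] extended to ideals by minimum valuation. -/

import Mathlib

open PowerSeries IsLocalRing

set_option synthInstance.maxHeartbeats 1000000
set_option maxHeartbeats 1000000

/-- The trace ideal of an `R`-module `M`: the ideal generated by all images of
`R`-linear maps `M → R`. -/
noncomputable def traceIdeal (R M : Type*) [CommRing R] [AddCommGroup M] [Module R M] :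
    Ideal R :=
  ⨆ f : M →ₗ[R] R, LinearMap.range f


section helpers

variable {k : Type*} [Field k] (S : Subalgebra k (PowerSeries k)) [IsLocalRing S]

theorem aux_max (x : S) (hx : x ∈ maximalIdeal S) :
    (X : PowerSeries k) ∣ (x : PowerSeries k) := by
  rw [PowerSeries.X_dvd_iff]
  by_contra ha
  set a := constantCoeff (x : PowerSeries k) with hadef
  have h1 : IsUnit (algebraMap k S a) := (IsUnit.mk0 a ha).map _
  have h2 : IsUnit (algebraMap k S a - x) := by
    by_contra h
    have h3 : algebraMap k S a - x ∈ maximalIdeal S := h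
    have h4 := Ideal.add_mem _ h3 hx
    rw [sub_add_cancel] at h4
    exact h4 h1
  have h5 := (h2.map S.val).map (constantCoeff (R := k))
  have h6 : constantCoeff (S.val (algebraMap k S a - x)) = 0 := by
    rw [map_sub, map_sub, AlgHom.commutes]
    simp [hadef, PowerSeries.algebraMap_apply]
  rw [h6] at h5
  exact not_isUnit_zero h5

theorem aux_pow (n : ℕ) (x : S) (hx : x ∈ maximalIdeal S ^ n) :
    (X : PowerSeries k) ^ n ∣ (x : PowerSeries k) := by
  have h1 : maximalIdeal S ≤ (Ideal.span {(X : PowerSeries k)}).comap S.val := by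
    intro y hy
    rw [Ideal.mem_comap, Ideal.mem_span_singleton]
    exact aux_max S y hy
  have h2 := Ideal.pow_right_mono h1 n |>.trans (Ideal.le_comap_pow S.val n)
  have h3 := h2 hx
  rw [Ideal.mem_comap, Ideal.span_singleton_pow, Ideal.mem_span_singleton] at h3
  exact h3

theorem aux_cond [IsAdicComplete (maximalIdeal S) S] (c : ℕ) (hc0 : 0 < c)
    (hc : ∀ i : ℕ, c ≤ i → (X : PowerSeries k) ^ i ∈ S) (g : PowerSeries k) :
    X ^ c * g ∈ S := by
  let T : ℕ → S := fun i => ⟨X ^ (c + i), hc _ (by omega)⟩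
  let u : S := ⟨X ^ c, hc _ le_rfl⟩
  have hu : u ∈ maximalIdeal S := by
    intro h
    have h5 := (h.map S.val).map (constantCoeff (R := k))
    have h6 : constantCoeff (S.val u) = 0 := by
      simp [u, hc0.ne']
    rw [h6] at h5
    exact not_isUnit_zero h5
  let F : ℕ → S := fun n => ∑ i ∈ Finset.range (c * n), (coeff i g) • T i
  have hF : ∀ {m n : ℕ}, m ≤ n →
      F m ≡ F n [SMOD (maximalIdeal S ^ m • ⊤ : Submodule S S)] := by
    intro m n hmn
    symm
    rw [SModEq.sub_mem, smul_eq_mul, Ideal.mul_top]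
    simp only [F]
    rw [← Finset.sum_sdiff_eq_sub (Finset.range_mono (Nat.mul_le_mul_left c hmn))]
    refine Ideal.sum_mem _ fun i hi => ?_
    have hi' : c * m ≤ i := by
      simp only [Finset.mem_sdiff, Finset.mem_range] at hi
      omega
    have : coeff i g • T i = (coeff i g • T (i - c * m)) * u ^ m := by
      rw [smul_mul_assoc]
      congr 1
      apply Subtype.ext
      simp only [T, u, MulMemClass.coe_mul, SubmonoidClass.coe_pow]
      rw [← pow_mul, ← pow_add]
      congr 1
      omega
    rw [this]
    exact Ideal.mul_mem_left _ _ (Ideal.pow_mem_pow hu m)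
  obtain ⟨L, hL⟩ := IsPrecomplete.prec (I := maximalIdeal S) (M := S) inferInstance hF
  have : X ^ c * g = (L : PowerSeries k) := by
    ext j
    have h1 := hL (j + 1)
    rw [SModEq.sub_mem, smul_eq_mul, Ideal.mul_top] at h1
    have h2 := aux_pow S _ _ h1
    rw [PowerSeries.X_pow_dvd_iff] at h2
    have h3 := h2 j (by omega)
    have h4 : coeff j (L : PowerSeries k) = coeff j ((F (j + 1) : S) : PowerSeries k) := by
      have : ((F (j + 1) - L : S) : PowerSeries k) = (F (j+1) : S) - (L : PowerSeries k) := rfl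
      rw [this, map_sub] at h3
      exact (sub_eq_zero.mp h3).symm
    rw [h4]
    have h5 : ((F (j + 1) : S) : PowerSeries k) =
        ∑ i ∈ Finset.range (c * (j + 1)), (coeff i g) • (X : PowerSeries k) ^ (c + i) := by
      simp [F, T]
    rw [h5, map_sum, PowerSeries.coeff_X_pow_mul']
    simp only [map_smul, PowerSeries.coeff_X_pow, smul_eq_mul, mul_ite, mul_one, mul_zero]
    split_ifs with hcj
    · rw [Finset.sum_eq_single (j - c)]
      · rw [if_pos (by omega)]
      · intro b _ hb
        rw [if_neg (by omega)]
      · intro hb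
        exfalso
        apply hb
        rw [Finset.mem_range]
        nlinarith [Nat.sub_le j c]
    · symm
      apply Finset.sum_eq_zero
      intro b _
      rw [if_neg (by omega)]
  rw [this]
  exact L.2

theorem aux_der [CharZero k] [IsAdicComplete (maximalIdeal S) S] (c : ℕ) (hc0 : 0 < c)
    (hc : ∀ i : ℕ, c ≤ i → (X : PowerSeries k) ^ i ∈ S) (D : Derivation k S S)
    (hD : D ⟨X ^ c, hc c le_rfl⟩ = 0) : D = 0 := by
  have hpow : ∀ i (hi : c ≤ i), D ⟨X ^ i, hc i hi⟩ = 0 := by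
    intro i hi
    have h1 : (⟨X ^ i, hc i hi⟩ : S) ^ c = (⟨X ^ c, hc c le_rfl⟩ : S) ^ i := by
      apply Subtype.ext
      simp only [SubmonoidClass.coe_pow]
      rw [← pow_mul, ← pow_mul, mul_comm]
    have h2 := congrArg D h1
    rw [D.leibniz_pow, D.leibniz_pow, hD, smul_zero, smul_zero] at h2
    have hne : (⟨X ^ i, hc i hi⟩ : S) ≠ 0 := by
      intro h
      have := congrArg Subtype.val h
      exact pow_ne_zero i (PowerSeries.X_ne_zero (R := k)) this
    have hcz : CharZero S := charZero_of_injective_algebraMap (algebraMap k S).injective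
    rw [nsmul_eq_mul, smul_eq_mul] at h2
    rcases mul_eq_zero.mp h2 with h | h
    · exact absurd (Nat.cast_eq_zero.mp h) hc0.ne'
    · rcases mul_eq_zero.mp h with h | h
      · exact absurd h (pow_ne_zero _ hne)
      · exact h
  have hcond := aux_cond S c hc0 hc
  ext f
  let y : S := ⟨X ^ c * (f : PowerSeries k), hcond _⟩
  have hy : D y = 0 := by
    apply Subtype.ext
    ext j
    -- split off the first terms of f
    let N := c + j + 1
    let g : PowerSeries k := PowerSeries.mk fun p => coeff (p + N) (f : PowerSeries k)
    have hsplit : (f : PowerSeries k) =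
        X ^ N * g + ((PowerSeries.trunc N (f : PowerSeries k) : Polynomial k) : PowerSeries k) :=
      PowerSeries.eq_X_pow_mul_shift_add_trunc N _
    have htr : ((PowerSeries.trunc N (f : PowerSeries k) : Polynomial k) : PowerSeries k) =
        ∑ i ∈ Finset.range N, (coeff i (f : PowerSeries k)) • (X : PowerSeries k) ^ i := by
      ext p
      rw [Polynomial.coeff_coe, PowerSeries.coeff_trunc, map_sum]
      simp [PowerSeries.coeff_X_pow]
    have hyeq : y = (⟨X ^ N, hc N (by omega)⟩ : S) * ⟨X ^ c * g, hcond g⟩ +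
        ∑ i ∈ Finset.range N, (coeff i (f : PowerSeries k)) •
          (⟨X ^ (c + i), hc _ (by omega)⟩ : S) := by
      apply Subtype.ext
      simp only [y, AddMemClass.coe_add, MulMemClass.coe_mul, AddSubmonoidClass.coe_finsetSum,
        SetLike.val_smul]
      conv_lhs => rw [hsplit, htr]
      rw [mul_add, Finset.mul_sum]
      congr 1
      · ring
      · refine Finset.sum_congr rfl fun i _ => ?_
        rw [mul_smul_comm, pow_add]
    rw [hyeq, map_add, map_sum, D.leibniz, hpow N (by omega), smul_zero, add_zero,
      Finset.sum_eq_zero, add_zero]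
    · simp only [smul_eq_mul, MulMemClass.coe_mul]
      rw [PowerSeries.coeff_X_pow_mul', if_neg (by omega)]
      simp
    · intro i _
      rw [D.map_smul, hpow _ (by omega), smul_zero]
  have hy2 : y = (⟨X ^ c, hc c le_rfl⟩ : S) * f := rfl
  rw [hy2, D.leibniz, hD, smul_zero, add_zero, smul_eq_mul] at hy
  rcases mul_eq_zero.mp hy with h | h
  · exact absurd (congrArg Subtype.val h) (pow_ne_zero c (PowerSeries.X_ne_zero (R := k)))
  · simp [h]

theorem aux_lin [CharZero k] [IsAdicComplete (maximalIdeal S) S] (c : ℕ) (hc0 : 0 < c)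
    (hc : ∀ i : ℕ, c ≤ i → (X : PowerSeries k) ^ i ∈ S) (f : (Ω[S⁄k]) →ₗ[S] S)
    (hf : f (KaehlerDifferential.D k S ⟨X ^ c, hc c le_rfl⟩) = 0) : f = 0 := by
  have h := aux_der S c hc0 hc (f.compDer (KaehlerDifferential.D k S)) hf
  apply Derivation.liftKaehlerDifferential_unique
  rw [h]
  ext x
  simp

end helpers

/-- Let `(R, 𝔪, k)` be a non-regular complete local one-dimensional domain with `k`
algebraically closed of characteristic `0`, realized as a subalgebra `S ⊆ k⟦t⟧` with
integral closure `k⟦t⟧` (nonzero conductor), `Ω_S` its module of differentials and `v`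
the `t`-adic valuation, extended to ideals by taking minimal valuations.  Then `R` is
such that `Ω_S` surjects onto `𝔪` (quasihomogeneous).  Then `v(tr_R(Ω_S)) = v(𝔪)`. -/
theorem stmt19 (k : Type*) [Field k] [IsAlgClosed k] [CharZero k]
    (S : Subalgebra k (PowerSeries k)) [IsLocalRing S] [IsNoetherianRing S]
    [IsAdicComplete (maximalIdeal S) S]
    (hdim : ringKrullDim S = 1)
    -- `k⟦t⟧` is the integral closure of `S` in its fraction field: the conductor is nonzero
    (c : ℕ) (hc : ∀ i : ℕ, c ≤ i → (X : PowerSeries k) ^ i ∈ S)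
    -- `S` is non-regular, i.e. its maximal ideal is not principal
    (hreg : ¬ (maximalIdeal S).IsPrincipal)
    (vtr vm : ℕ)
    -- `vtr = v(tr_S(Ω_S))`
    (hvtr : IsLeast {m : ℕ | ∃ x : S, x ∈ traceIdeal S (Ω[S⁄k]) ∧
      (x : PowerSeries k) ≠ 0 ∧ (x : PowerSeries k).order = (m : ℕ∞)} vtr)
    -- `vm = v(𝔪)`
    (hvm : IsLeast {m : ℕ | ∃ x : S, x ∈ maximalIdeal S ∧
      (x : PowerSeries k) ≠ 0 ∧ (x : PowerSeries k).order = (m : ℕ∞)} vm)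
    -- `S` is quasihomogeneous: there is a surjection `Ω_S ↠ 𝔪`
    (hqh : ∃ φ : (Ω[S⁄k]) →ₗ[S] S, LinearMap.range φ = (maximalIdeal S : Ideal S)) :
    vtr = vm := by
  obtain ⟨φ, hφ⟩ := hqh
  have hc' : ∀ i : ℕ, c + 1 ≤ i → (X : PowerSeries k) ^ i ∈ S := fun i hi => hc i (by omega)
  have key := aux_lin S (c + 1) (Nat.succ_pos c) hc'
  have htr : traceIdeal S (Ω[S⁄k]) = maximalIdeal S := by
    apply le_antisymm
    · refine iSup_le fun f => ?_
      apply IsLocalRing.le_maximalIdeal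
      intro hf
      obtain ⟨w, hw⟩ : (1 : S) ∈ LinearMap.range f := by rw [hf]; trivial
      apply hreg
      set x := KaehlerDifferential.D k S ⟨X ^ (c + 1), hc' (c + 1) le_rfl⟩ with hx
      have hfx : f x ≠ 0 := by
        intro h
        have := key f h
        rw [this] at hw
        simp at hw
      have hψ : f x • φ - φ x • f = 0 := by
        apply key
        simp only [LinearMap.sub_apply, LinearMap.smul_apply, smul_eq_mul, ← hx]
        ring
      have hprop : ∀ ω, f x * φ ω = φ x * f ω := by
        intro ω
        have := LinearMap.congr_fun hψ ω
        simp only [LinearMap.sub_apply, LinearMap.smul_apply, smul_eq_mul,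
          LinearMap.zero_apply] at this
        exact sub_eq_zero.mp this
      have hrel : ∀ ω, φ ω = f ω * φ w := by
        intro ω
        apply mul_left_cancel₀ hfx
        have h1 := hprop ω
        have h2 := hprop w
        rw [hw] at h2
        linear_combination h1 - f ω * h2
      refine ⟨⟨φ w, ?_⟩⟩
      rw [← hφ]
      apply le_antisymm
      · rintro _ ⟨ω, rfl⟩
        rw [hrel ω]
        exact Submodule.smul_mem _ _ (Submodule.mem_span_singleton_self _)
      · rw [Submodule.span_singleton_le_iff_mem]
        exact ⟨w, rfl⟩
    · rw [← hφ]
      exact le_iSup (fun f : (Ω[S⁄k]) →ₗ[S] S => LinearMap.range f) φ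
  rw [htr] at hvtr
  exact hvtr.unique hvm
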